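/- Let π⋆ > 0, α⋆ > 0, q₂ > 0, C₂ ≥ 0, and 0 < r < q₂ (where r = C₁ − q₁ is the residual HOT-lane capacity available to SOVs). For a time horizon T > 0 and a constant paying-SOV flow rate x ∈ (0, r], define the approximate total cost φ_T(x) = π⋆·q₂·(q₂ − x − C₂)·T²/2 + (1/α⋆)·x·ln((q₂ − x)/x)·T. Then for every x ∈ (0, r) there exists T₀ > 0 such that for all T ≥ T₀, φ_T(r) < φ_T(x). In other words, for sufficiently long horizons the choice q₃ = C₁ − q₁ (equivalently, zero residual capacity ζ = 0) minimizes the approximate total cost, so maximizing the HOT lanes' throughput approximately solves the cost-minimization (social welfare optimization) problem under the logit lane-choice model. -/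

import Mathlib

open Filter

theorem eventually_mul_sq_add_mul_lt {K : Type*} [Field K] [LinearOrder K]
    [IsStrictOrderedRing K] {a a' : K} (ha : a < a') (b b' : K) :
    ∀ᶠ t in atTop, a * t ^ 2 + b * t < a' * t ^ 2 + b' * t := by
  filter_upwards [eventually_gt_atTop 0, eventually_gt_atTop ((b - b') / (a' - a))]
    with t ht_pos ht_large
  have linear_gap : b - b' < t * (a' - a) := (div_lt_iff₀ (sub_pos.2 ha)).1 ht_large
  have linear_lt : a * t + b < a' * t + b' := by linarith
  calc a * t ^ 2 + b * t = (a * t + b) * t := by ring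
    _ < (a' * t + b') * t := mul_lt_mul_of_pos_right linear_lt ht_pos
    _ = a' * t ^ 2 + b' * t := by ring

/-- Queueing costs accumulate quadratically in the horizon, toll payments only linearly,
whichever lane-choice model sets the toll. -/
theorem throughput_maximization_approx_welfare_optimal_general
    {πs q₂ C₂ r : ℝ} (hπ : 0 < πs) (hq₂ : 0 < q₂) {tollRevenueRate : ℝ → ℝ}
    {φ : ℝ → ℝ → ℝ}
    (hφ : ∀ T x, φ T x = πs * q₂ * (q₂ - x - C₂) * T ^ 2 / 2 + tollRevenueRate x * T) :
    ∀ x < r, ∃ T₀ > 0, ∀ T ≥ T₀, φ T r < φ T x := by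
  intro x hxr
  have queueing_lt : πs * q₂ * (q₂ - r - C₂) / 2 < πs * q₂ * (q₂ - x - C₂) / 2 := by gcongr
  have cost_lt : ∀ᶠ T in atTop, φ T r < φ T x := by
    simpa only [hφ, div_mul_eq_mul_div] using
      eventually_mul_sq_add_mul_lt queueing_lt (tollRevenueRate r) (tollRevenueRate x)
  obtain ⟨T₀, hT₀_ge_one, hlt⟩ := (atTop_basis' (1 : ℝ)).eventually_iff.1 cost_lt
  exact ⟨T₀, one_pos.trans_le hT₀_ge_one, fun T hT => hlt hT⟩

/-- Under the logit lane-choice model, for long enough horizons the approximate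
total cost `φ_T(x) = π⋆ q₂ (q₂ - x - C₂) T²/2 + (1/α⋆) x ln((q₂ - x)/x) T` is
minimized over `(0, r]` at `x = r = C₁ - q₁`: for every `x ∈ (0, r)` there is
`T₀ > 0` such that `φ_T(r) < φ_T(x)` for all `T ≥ T₀`.  Hence maximizing the HOT
lanes' throughput approximately solves the social welfare optimization problem. -/
theorem throughput_maximization_approx_welfare_optimal
    (πs αs q₂ C₂ r : ℝ)
    (hπ : 0 < πs) (hα : 0 < αs) (hq₂ : 0 < q₂) (hC₂ : 0 ≤ C₂)
    (hr0 : 0 < r) (hrq : r < q₂)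
    (φ : ℝ → ℝ → ℝ)
    (hφ : ∀ T x, φ T x =
      πs * q₂ * (q₂ - x - C₂) * T ^ 2 / 2 + (1 / αs) * x * Real.log ((q₂ - x) / x) * T) :
    ∀ x ∈ Set.Ioo 0 r, ∃ T₀ > 0, ∀ T ≥ T₀, φ T r < φ T x :=
  fun x hx => throughput_maximization_approx_welfare_optimal_general hπ hq₂ hφ x hx.2
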